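/- arXiv:2304.14386 — 2 statements merged into one kernel-verified Lean document; each statement's English description precedes it below -/
import Mathlib

section
/- Let g : ℝ^p → ℝ^p be twice continuously differentiable with Jacobian G, let W be symmetric positive definite with λ_min(W) ≥ λ̲_W > 0 and λ_max(W) ≤ λ̄_W, let θ̂ satisfy G(θ̂)ᵀ W g(θ̂) = 0, suppose G is Lipschitz with constant L and σ_min[G(θ_k)] ≥ σ̲ > 0 at a point θ_k. Then the Gauss-Newton update θ_{k+1} = θ_k − γ[G(θ_k)ᵀ W G(θ_k)]⁻¹ G(θ_k)ᵀ W g(θ_k) with γ ∈ (0,1) satisfies the one-step bound ‖θ_{k+1} − θ̂‖ ≤ (1 − γ + γ[σ̲⁻¹·√(λ̄_W/λ̲_W)·L·‖θ_k − θ̂‖ + σ̲⁻²·(√λ̄_W/λ̲_W)·L·‖g(θ̂)‖_W])·‖θ_k − θ̂‖. -/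
open Matrix Set MeasureTheory
open scoped BigOperators

noncomputable section

/-- Euclidean norm of a vector in `Fin n → ℝ`. -/
def enorm' {n : ℕ} (v : Fin n → ℝ) : ℝ := Real.sqrt (∑ i, v i ^ 2)

/-- Smallest singular value of a matrix. -/
def sigMin {m p : ℕ} (A : Matrix (Fin m) (Fin p) ℝ) : ℝ :=
  sInf {c : ℝ | ∃ v : Fin p → ℝ, enorm' v = 1 ∧ c = enorm' (A *ᵥ v)}

/-- Largest singular value of a matrix (operator norm). -/
def sigMax {m p : ℕ} (A : Matrix (Fin m) (Fin p) ℝ) : ℝ :=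
  sSup {c : ℝ | ∃ v : Fin p → ℝ, enorm' v = 1 ∧ c = enorm' (A *ᵥ v)}

/-- Smallest eigenvalue of a (symmetric) square matrix, via the Rayleigh quotient. -/
def lamMin {n : ℕ} (A : Matrix (Fin n) (Fin n) ℝ) : ℝ :=
  sInf {c : ℝ | ∃ v : Fin n → ℝ, enorm' v = 1 ∧ c = v ⬝ᵥ (A *ᵥ v)}

/-- Largest eigenvalue of a (symmetric) square matrix, via the Rayleigh quotient. -/
def lamMax {n : ℕ} (A : Matrix (Fin n) (Fin n) ℝ) : ℝ :=
  sSup {c : ℝ | ∃ v : Fin n → ℝ, enorm' v = 1 ∧ c = v ⬝ᵥ (A *ᵥ v)}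

/-- Weighted norm `‖v‖_W = √(vᵀ W v)`. -/
def wnorm {m : ℕ} (W : Matrix (Fin m) (Fin m) ℝ) (v : Fin m → ℝ) : ℝ :=
  Real.sqrt (v ⬝ᵥ (W *ᵥ v))

/-- A matrix viewed as a continuous linear map `ℝ^p → ℝ^m`. -/
def toCLM {m p : ℕ} (A : Matrix (Fin m) (Fin p) ℝ) : (Fin p → ℝ) →L[ℝ] (Fin m → ℝ) :=
  LinearMap.toContinuousLinearMap A.mulVecLin

/-!
Write `e = θk - θhat`, `A = G θk`, `r = A e - (g θk - g θhat)` for the linearization error, and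
`H = Aᵀ W A`. Since `H⁻¹ Aᵀ W A e = e` and `(G θhat)ᵀ W g θhat = 0`, the error after a full step is

  `e - H⁻¹ Aᵀ W g θk = H⁻¹ Aᵀ W r - H⁻¹ (A - G θhat)ᵀ W g θhat`.

Both terms have the form `x = H⁻¹ Bᵀ W v`. Pairing `H x = Bᵀ W v` with `x` and applying
Cauchy-Schwarz for `W` gives `‖A x‖_W² ≤ ‖B x‖_W ‖v‖_W`. For `B = A` this says
`‖A x‖_W ≤ ‖v‖_W`, and the mean value inequality bounds `r` by `L ‖e‖²`; for `B = A - G θhat` the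
Lipschitz condition bounds `B` by `L ‖e‖`. A damped step is a convex combination of `e` and the
error after a full step.
-/

section EuclideanNorm

variable {n : ℕ}

lemma enorm'_eq_norm_toLp (v : Fin n → ℝ) : enorm' v = ‖WithLp.toLp 2 v‖ := by
  simp [enorm', EuclideanSpace.norm_eq]

lemma enorm'_nonneg (v : Fin n → ℝ) : 0 ≤ enorm' v := Real.sqrt_nonneg _

lemma enorm'_zero : enorm' (0 : Fin n → ℝ) = 0 := by simp [enorm']

lemma enorm'_eq_zero {v : Fin n → ℝ} : enorm' v = 0 ↔ v = 0 := by
  simp [enorm'_eq_norm_toLp]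

lemma enorm'_add_le (v w : Fin n → ℝ) : enorm' (v + w) ≤ enorm' v + enorm' w := by
  simpa only [enorm'_eq_norm_toLp, WithLp.toLp_add] using norm_add_le _ _

lemma enorm'_sub_le (v w : Fin n → ℝ) : enorm' (v - w) ≤ enorm' v + enorm' w := by
  simpa only [enorm'_eq_norm_toLp, WithLp.toLp_sub] using norm_sub_le _ _

lemma enorm'_smul (c : ℝ) (v : Fin n → ℝ) : enorm' (c • v) = |c| * enorm' v := by
  simp only [enorm'_eq_norm_toLp, WithLp.toLp_smul, norm_smul, Real.norm_eq_abs]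

lemma abs_dotProduct_le_enorm'_mul_enorm' (v w : Fin n → ℝ) :
    |v ⬝ᵥ w| ≤ enorm' v * enorm' w := by
  simpa only [enorm'_eq_norm_toLp, EuclideanSpace.inner_toLp_toLp, star_trivial,
    dotProduct_comm w] using abs_real_inner_le_norm (WithLp.toLp 2 v) (WithLp.toLp 2 w)

lemma exists_enorm'_eq_one_and_eq_smul {v : Fin n → ℝ} (hv : v ≠ 0) :
    ∃ u : Fin n → ℝ, enorm' u = 1 ∧ v = enorm' v • u := by
  have hne : enorm' v ≠ 0 := enorm'_eq_zero.not.mpr hv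
  refine ⟨(enorm' v)⁻¹ • v, ?_, (smul_inv_smul₀ hne v).symm⟩
  rw [enorm'_smul, abs_inv, abs_of_nonneg (enorm'_nonneg v), inv_mul_cancel₀ hne]

lemma enorm'_sub_le_of_mem_segment {a b θ : Fin n → ℝ} (hθ : θ ∈ segment ℝ a b) :
    enorm' (b - θ) ≤ enorm' (b - a) := by
  obtain ⟨s, t, hs, ht, hst, rfl⟩ := hθ
  have hdiff : b - (s • a + t • b) = s • (b - a) := by
    rw [← eq_sub_iff_add_eq] at hst
    subst hst
    module
  rw [hdiff, enorm'_smul, abs_of_nonneg hs]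
  exact mul_le_of_le_one_left (enorm'_nonneg _) (by linarith)

end EuclideanNorm

section SingularValues

open scoped Matrix.Norms.L2Operator

variable {m p : ℕ}

lemma enorm'_mulVec_le_l2_opNorm (A : Matrix (Fin m) (Fin p) ℝ) (v : Fin p → ℝ) :
    enorm' (A *ᵥ v) ≤ ‖A‖ * enorm' v := by
  rw [enorm'_eq_norm_toLp, enorm'_eq_norm_toLp]
  exact l2_opNorm_mulVec A (WithLp.toLp 2 v)

lemma sigMax_eq_l2_opNorm (A : Matrix (Fin m) (Fin p) ℝ) : sigMax A = ‖A‖ := by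
  have unit_bound : ∀ v, enorm' v = 1 → enorm' (A *ᵥ v) ≤ ‖A‖ := fun v hv => by
    simpa only [hv, mul_one] using enorm'_mulVec_le_l2_opNorm A v
  apply le_antisymm
  · refine Real.sSup_le ?_ (norm_nonneg A)
    rintro _ ⟨v, hv, rfl⟩
    exact unit_bound v hv
  · rw [l2_opNorm_def]
    refine ContinuousLinearMap.opNorm_le_of_unit_norm (Real.sSup_nonneg ?_) fun v hv => ?_
    · rintro _ ⟨v, -, rfl⟩
      exact enorm'_nonneg _
    · refine le_csSup ⟨‖A‖, ?_⟩ ⟨v.ofLp, by rwa [enorm'_eq_norm_toLp], ?_⟩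
      · rintro _ ⟨u, hu, rfl⟩
        exact unit_bound u hu
      · exact (enorm'_eq_norm_toLp _).symm

lemma sigMax_nonneg (A : Matrix (Fin m) (Fin p) ℝ) : 0 ≤ sigMax A :=
  sigMax_eq_l2_opNorm A ▸ norm_nonneg A

lemma enorm'_mulVec_le_sigMax (A : Matrix (Fin m) (Fin p) ℝ) (v : Fin p → ℝ) :
    enorm' (A *ᵥ v) ≤ sigMax A * enorm' v :=
  sigMax_eq_l2_opNorm A ▸ enorm'_mulVec_le_l2_opNorm A v

lemma sigMin_mul_enorm'_le (A : Matrix (Fin m) (Fin p) ℝ) (v : Fin p → ℝ) :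
    sigMin A * enorm' v ≤ enorm' (A *ᵥ v) := by
  rcases eq_or_ne v 0 with rfl | hv
  · simp [enorm'_zero]
  obtain ⟨u, hu, hvu⟩ := exists_enorm'_eq_one_and_eq_smul hv
  have bddBelow : BddBelow {c : ℝ | ∃ v, enorm' v = 1 ∧ c = enorm' (A *ᵥ v)} :=
    ⟨0, by rintro _ ⟨w, -, rfl⟩; exact enorm'_nonneg _⟩
  calc sigMin A * enorm' v
      ≤ enorm' (A *ᵥ u) * enorm' v :=
        mul_le_mul_of_nonneg_right (csInf_le bddBelow ⟨u, hu, rfl⟩) (enorm'_nonneg v)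
    _ = enorm' (A *ᵥ v) := by
        conv_rhs => rw [hvu, mulVec_smul, enorm'_smul, abs_of_nonneg (enorm'_nonneg v), mul_comm]

lemma mulVec_injective_of_sigMin_pos {A : Matrix (Fin m) (Fin p) ℝ} (hA : 0 < sigMin A) :
    Function.Injective A.mulVec := by
  refine (injective_iff_map_eq_zero A.mulVecLin).2 fun v hv => ?_
  have hle : sigMin A * enorm' v ≤ 0 := by
    simpa only [← mulVecLin_apply, hv, enorm'_zero] using sigMin_mul_enorm'_le A v
  exact enorm'_eq_zero.mp
    (le_antisymm (nonpos_of_mul_nonpos_right hle hA) (enorm'_nonneg v))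

end SingularValues

section RayleighQuotient

open scoped Matrix.Norms.L2Operator

variable {n : ℕ} (A : Matrix (Fin n) (Fin n) ℝ)

lemma abs_dotProduct_mulVec_self_le_l2_opNorm {v : Fin n → ℝ} (hv : enorm' v = 1) :
    |v ⬝ᵥ (A *ᵥ v)| ≤ ‖A‖ := by
  simpa only [hv, one_mul, mul_one] using
    (abs_dotProduct_le_enorm'_mul_enorm' v (A *ᵥ v)).trans
      (mul_le_mul_of_nonneg_left (enorm'_mulVec_le_l2_opNorm A v) (enorm'_nonneg v))

lemma dotProduct_mulVec_smul_smul (c : ℝ) (u : Fin n → ℝ) :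
    (c • u) ⬝ᵥ (A *ᵥ (c • u)) = (u ⬝ᵥ (A *ᵥ u)) * c ^ 2 := by
  simp only [mulVec_smul, smul_dotProduct, dotProduct_smul, smul_eq_mul]
  ring

lemma lamMin_mul_enorm'_sq_le (v : Fin n → ℝ) :
    lamMin A * enorm' v ^ 2 ≤ v ⬝ᵥ (A *ᵥ v) := by
  rcases eq_or_ne v 0 with rfl | hv
  · simp [enorm'_zero]
  obtain ⟨u, hu, hvu⟩ := exists_enorm'_eq_one_and_eq_smul hv
  have bddBelow : BddBelow {c : ℝ | ∃ v, enorm' v = 1 ∧ c = v ⬝ᵥ (A *ᵥ v)} := by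
    refine ⟨-‖A‖, ?_⟩
    rintro _ ⟨w, hw, rfl⟩
    exact neg_le_of_abs_le (abs_dotProduct_mulVec_self_le_l2_opNorm A hw)
  calc lamMin A * enorm' v ^ 2
      ≤ (u ⬝ᵥ (A *ᵥ u)) * enorm' v ^ 2 :=
        mul_le_mul_of_nonneg_right (csInf_le bddBelow ⟨u, hu, rfl⟩) (sq_nonneg _)
    _ = v ⬝ᵥ (A *ᵥ v) := by rw [← dotProduct_mulVec_smul_smul, ← hvu]

lemma dotProduct_mulVec_self_le_lamMax (v : Fin n → ℝ) :
    v ⬝ᵥ (A *ᵥ v) ≤ lamMax A * enorm' v ^ 2 := by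
  rcases eq_or_ne v 0 with rfl | hv
  · simp [enorm'_zero]
  obtain ⟨u, hu, hvu⟩ := exists_enorm'_eq_one_and_eq_smul hv
  have bddAbove : BddAbove {c : ℝ | ∃ v, enorm' v = 1 ∧ c = v ⬝ᵥ (A *ᵥ v)} := by
    refine ⟨‖A‖, ?_⟩
    rintro _ ⟨w, hw, rfl⟩
    exact le_of_abs_le (abs_dotProduct_mulVec_self_le_l2_opNorm A hw)
  calc v ⬝ᵥ (A *ᵥ v)
      = (u ⬝ᵥ (A *ᵥ u)) * enorm' v ^ 2 := by rw [← dotProduct_mulVec_smul_smul, ← hvu]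
    _ ≤ lamMax A * enorm' v ^ 2 :=
        mul_le_mul_of_nonneg_right (le_csSup bddAbove ⟨u, hu, rfl⟩) (sq_nonneg _)

end RayleighQuotient

section WeightedNorm

variable {m p : ℕ} {W : Matrix (Fin m) (Fin m) ℝ} {lo hi σ : ℝ}

lemma wnorm_nonneg (W : Matrix (Fin m) (Fin m) ℝ) (v : Fin m → ℝ) : 0 ≤ wnorm W v :=
  Real.sqrt_nonneg _

lemma wnorm_sq (hW : W.PosSemidef) (v : Fin m → ℝ) : wnorm W v ^ 2 = v ⬝ᵥ (W *ᵥ v) :=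
  Real.sq_sqrt (hW.dotProduct_mulVec_nonneg v)

lemma dotProduct_mulVec_le_wnorm_mul_wnorm (hW : W.PosSemidef) (v w : Fin m → ℝ) :
    v ⬝ᵥ (W *ᵥ w) ≤ wnorm W v * wnorm W w := by
  have hsymm : (toBilin' W).IsSymm :=
    isSymm_toBilin'_iff_isSymm.2 (isHermitian_iff_isSymm.1 hW.isHermitian)
  have hnonneg : ∀ x, 0 ≤ x ⬝ᵥ (W *ᵥ x) := hW.dotProduct_mulVec_nonneg
  have hsq : (v ⬝ᵥ (W *ᵥ w)) ^ 2 ≤ (v ⬝ᵥ (W *ᵥ v)) * (w ⬝ᵥ (W *ᵥ w)) := by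
    simpa only [toBilin'_apply'] using (toBilin' W).apply_sq_le_of_symm
      (fun x => (toBilin'_apply' W x x).symm ▸ hnonneg x) ⟨hsymm.eq⟩ v w
  rw [wnorm, wnorm, ← Real.sqrt_mul (hnonneg v)]
  exact Real.le_sqrt_of_sq_le hsq

lemma sqrt_mul_enorm'_le_wnorm (hlo : lo ≤ lamMin W) (v : Fin m → ℝ) :
    √lo * enorm' v ≤ wnorm W v := by
  rw [← Real.sqrt_sq (enorm'_nonneg v), ← Real.sqrt_mul' _ (sq_nonneg _)]
  exact Real.sqrt_le_sqrt ((mul_le_mul_of_nonneg_right hlo (sq_nonneg _)).trans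
    (lamMin_mul_enorm'_sq_le W v))

lemma wnorm_le_sqrt_mul_enorm' (hhi : lamMax W ≤ hi) (v : Fin m → ℝ) :
    wnorm W v ≤ √hi * enorm' v := by
  rw [← Real.sqrt_sq (enorm'_nonneg v), ← Real.sqrt_mul' _ (sq_nonneg _)]
  exact Real.sqrt_le_sqrt ((dotProduct_mulVec_self_le_lamMax W v).trans
    (mul_le_mul_of_nonneg_right hhi (sq_nonneg _)))

lemma mul_sqrt_mul_enorm'_le_wnorm_mulVec (hlo : lo ≤ lamMin W)
    {A : Matrix (Fin m) (Fin p) ℝ} (hσ : σ ≤ sigMin A) (v : Fin p → ℝ) :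
    σ * √lo * enorm' v ≤ wnorm W (A *ᵥ v) :=
  calc σ * √lo * enorm' v = √lo * (σ * enorm' v) := by ring
    _ ≤ √lo * enorm' (A *ᵥ v) := by
        gcongr
        exact (mul_le_mul_of_nonneg_right hσ (enorm'_nonneg v)).trans (sigMin_mul_enorm'_le A v)
    _ ≤ wnorm W (A *ᵥ v) := sqrt_mul_enorm'_le_wnorm hlo _

end WeightedNorm

section NormalEquations

variable {m p : ℕ} {W : Matrix (Fin m) (Fin m) ℝ} {A : Matrix (Fin m) (Fin p) ℝ} {lo hi σ : ℝ}

/-- The solution `x` of the `W`-weighted normal equations `Aᵀ W A x = Bᵀ W v`. For `B = A` it is the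
weighted least-squares solution of `A x = v`, hence the Gauss-Newton direction when `A` is the
Jacobian and `v` the residual; a general `B` is allowed in order to cover the perturbation term
caused by a nonzero residual at the critical point. It is a junk value if `Aᵀ W A` is singular. -/
def normalSolution (W : Matrix (Fin m) (Fin m) ℝ) (A B : Matrix (Fin m) (Fin p) ℝ)
    (v : Fin m → ℝ) : Fin p → ℝ :=
  (Aᵀ * W * A)⁻¹ *ᵥ (Bᵀ *ᵥ (W *ᵥ v))

lemma isUnit_det_transpose_mul_mul_self (hW : W.PosDef) (hA : Function.Injective A.mulVec) :
    IsUnit (Aᵀ * W * A).det := by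
  rw [← isUnit_iff_isUnit_det, ← conjTranspose_eq_transpose_of_trivial]
  exact (hW.conjTranspose_mul_mul_same hA).isUnit

lemma mulVec_normalSolution (hW : W.PosDef) (hA : Function.Injective A.mulVec)
    (B : Matrix (Fin m) (Fin p) ℝ) (v : Fin m → ℝ) :
    (Aᵀ * W * A) *ᵥ normalSolution W A B v = Bᵀ *ᵥ (W *ᵥ v) := by
  rw [normalSolution, mulVec_mulVec,
    mul_nonsing_inv _ (isUnit_det_transpose_mul_mul_self hW hA), one_mulVec]

lemma normalSolution_mulVec_self (hW : W.PosDef) (hA : Function.Injective A.mulVec)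
    (x : Fin p → ℝ) : normalSolution W A A (A *ᵥ x) = x := by
  simp only [normalSolution, mulVec_mulVec]
  rw [← Matrix.mul_assoc Aᵀ, nonsing_inv_mul _ (isUnit_det_transpose_mul_mul_self hW hA),
    one_mulVec]

lemma wnorm_mulVec_normalSolution_sq_le (hW : W.PosDef) (hA : Function.Injective A.mulVec)
    (B : Matrix (Fin m) (Fin p) ℝ) (v : Fin m → ℝ) :
    wnorm W (A *ᵥ normalSolution W A B v) ^ 2
      ≤ wnorm W (B *ᵥ normalSolution W A B v) * wnorm W v := by
  set x := normalSolution W A B v with hx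
  calc wnorm W (A *ᵥ x) ^ 2 = x ⬝ᵥ ((Aᵀ * W * A) *ᵥ x) := by
        rw [wnorm_sq hW.posSemidef, ← mulVec_mulVec, ← mulVec_mulVec, dotProduct_mulVec x,
          vecMul_transpose]
    _ = (B *ᵥ x) ⬝ᵥ (W *ᵥ v) := by
        rw [hx, mulVec_normalSolution hW hA, dotProduct_mulVec _ Bᵀ, vecMul_transpose]
    _ ≤ wnorm W (B *ᵥ x) * wnorm W v := dotProduct_mulVec_le_wnorm_mul_wnorm hW.posSemidef _ _

lemma wnorm_mulVec_normalSolution_self_le (hW : W.PosDef) (hA : Function.Injective A.mulVec)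
    (v : Fin m → ℝ) : wnorm W (A *ᵥ normalSolution W A A v) ≤ wnorm W v := by
  rcases (wnorm_nonneg W (A *ᵥ normalSolution W A A v)).eq_or_lt with hzero | hpos
  · exact hzero ▸ wnorm_nonneg W v
  · exact le_of_mul_le_mul_left (sq (wnorm W _) ▸ wnorm_mulVec_normalSolution_sq_le hW hA A v) hpos

lemma enorm'_normalSolution_self_le (hW : W.PosDef) (hlo₀ : 0 < lo) (hlo : lo ≤ lamMin W)
    (hhi : lamMax W ≤ hi) (hσ₀ : 0 < σ) (hσ : σ ≤ sigMin A) (v : Fin m → ℝ) :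
    enorm' (normalSolution W A A v) ≤ σ⁻¹ * √(hi / lo) * enorm' v := by
  have hA := mulVec_injective_of_sigMin_pos (hσ₀.trans_le hσ)
  have hscaled : σ * √lo * enorm' (normalSolution W A A v) ≤ √hi * enorm' v :=
    calc σ * √lo * enorm' (normalSolution W A A v)
        ≤ wnorm W (A *ᵥ normalSolution W A A v) := mul_sqrt_mul_enorm'_le_wnorm_mulVec hlo hσ _
      _ ≤ wnorm W v := wnorm_mulVec_normalSolution_self_le hW hA v
      _ ≤ √hi * enorm' v := wnorm_le_sqrt_mul_enorm' hhi v
  calc enorm' (normalSolution W A A v) ≤ (√hi * enorm' v) / (σ * √lo) := by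
        rwa [le_div_iff₀' (by positivity)]
    _ = σ⁻¹ * √(hi / lo) * enorm' v := by
        rw [Real.sqrt_div' _ hlo₀.le]
        field_simp

lemma enorm'_normalSolution_le (hW : W.PosDef) (hlo₀ : 0 < lo) (hlo : lo ≤ lamMin W)
    (hhi : lamMax W ≤ hi) (hσ₀ : 0 < σ) (hσ : σ ≤ sigMin A) (B : Matrix (Fin m) (Fin p) ℝ)
    (v : Fin m → ℝ) :
    enorm' (normalSolution W A B v) ≤ (σ ^ 2)⁻¹ * (√hi / lo) * sigMax B * wnorm W v := by
  have hA := mulVec_injective_of_sigMin_pos (hσ₀.trans_le hσ)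
  set x := normalSolution W A B v
  have hquad : σ ^ 2 * lo * enorm' x * enorm' x ≤ √hi * sigMax B * wnorm W v * enorm' x :=
    calc σ ^ 2 * lo * enorm' x * enorm' x = (σ * √lo * enorm' x) ^ 2 := by
          rw [mul_pow, mul_pow, Real.sq_sqrt hlo₀.le]
          ring
      _ ≤ wnorm W (A *ᵥ x) ^ 2 :=
          pow_le_pow_left₀ (mul_nonneg (by positivity) (enorm'_nonneg x))
            (mul_sqrt_mul_enorm'_le_wnorm_mulVec hlo hσ x) 2
      _ ≤ wnorm W (B *ᵥ x) * wnorm W v := wnorm_mulVec_normalSolution_sq_le hW hA B v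
      _ ≤ √hi * (sigMax B * enorm' x) * wnorm W v := by
          refine mul_le_mul_of_nonneg_right ?_ (wnorm_nonneg W v)
          exact (wnorm_le_sqrt_mul_enorm' hhi _).trans
            (mul_le_mul_of_nonneg_left (enorm'_mulVec_le_sigMax B x) (Real.sqrt_nonneg hi))
      _ = √hi * sigMax B * wnorm W v * enorm' x := by ring
  have hbound : 0 ≤ √hi * sigMax B * wnorm W v :=
    mul_nonneg (mul_nonneg (Real.sqrt_nonneg hi) (sigMax_nonneg B)) (wnorm_nonneg W v)
  have hscaled : σ ^ 2 * lo * enorm' x ≤ √hi * sigMax B * wnorm W v := by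
    rcases (enorm'_nonneg x).eq_or_lt with hzero | hpos
    · rwa [← hzero, mul_zero]
    · exact le_of_mul_le_mul_right hquad hpos
  calc enorm' x ≤ (√hi * sigMax B * wnorm W v) / (σ ^ 2 * lo) := by
        rwa [le_div_iff₀' (by positivity)]
    _ = (σ ^ 2)⁻¹ * (√hi / lo) * sigMax B * wnorm W v := by field_simp

end NormalEquations

section GaussNewton

variable {m p : ℕ}

lemma enorm'_linearization_error_le {g : (Fin p → ℝ) → (Fin m → ℝ)}
    {G : (Fin p → ℝ) → Matrix (Fin m) (Fin p) ℝ} {s : Set (Fin p → ℝ)} (hs : Convex ℝ s)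
    (hG : ∀ θ ∈ s, HasFDerivWithinAt g (toCLM (G θ)) s θ) {a b : Fin p → ℝ} (ha : a ∈ s)
    (hb : b ∈ s) {C : ℝ} (hC : ∀ θ ∈ s, sigMax (G b - G θ) ≤ C) :
    enorm' (G b *ᵥ (b - a) - (g b - g a)) ≤ C * enorm' (b - a) := by
  -- `Fin n → ℝ` carries the sup norm, so the mean value inequality is applied on `EuclideanSpace`.
  let equivDom := EuclideanSpace.equiv (Fin p) ℝ
  let equivCod := EuclideanSpace.equiv (Fin m) ℝ
  let euclideanMap : Matrix (Fin m) (Fin p) ℝ ≃ₗ[ℝ] _ :=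
    toEuclideanLin.trans LinearMap.toContinuousLinearMap
  have hderiv : ∀ θ ∈ equivDom ⁻¹' s, HasFDerivWithinAt (equivCod.symm ∘ g ∘ equivDom)
      (euclideanMap (G (equivDom θ))) (equivDom ⁻¹' s) θ := fun θ hθ =>
    equivCod.symm.hasFDerivAt.comp_hasFDerivWithinAt θ
      ((hG _ hθ).comp θ equivDom.hasFDerivWithinAt (mapsTo_preimage _ _))
  have hbound : ∀ θ ∈ equivDom ⁻¹' s,
      ‖euclideanMap (G (equivDom θ)) - euclideanMap (G b)‖ ≤ C := fun θ hθ => by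
    rw [norm_sub_rev, ← map_sub, ← l2_opNorm_def, ← sigMax_eq_l2_opNorm]
    exact hC _ hθ
  have hmean := (hs.linear_preimage equivDom.toLinearMap)
    |>.norm_image_sub_le_of_norm_hasFDerivWithin_le' hderiv hbound
      (x := equivDom.symm a) (y := equivDom.symm b) (by simpa) (by simpa)
  rw [norm_sub_rev] at hmean
  rw [enorm'_eq_norm_toLp, enorm'_eq_norm_toLp]
  exact hmean

lemma gauss_newton_error_eq {W : Matrix (Fin m) (Fin m) ℝ} (hW : W.PosDef)
    {A B : Matrix (Fin m) (Fin p) ℝ} (hA : Function.Injective A.mulVec) {u v : Fin m → ℝ}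
    (hB : Bᵀ *ᵥ (W *ᵥ v) = 0) (x y : Fin p → ℝ) (γ : ℝ) :
    x - γ • normalSolution W A A u - y = (1 - γ) • (x - y)
      + γ • (normalSolution W A A (A *ᵥ (x - y) - (u - v)) - normalSolution W A (A - B) v) := by
  have hresidual : normalSolution W A A (A *ᵥ (x - y) - (u - v))
      = (x - y) - normalSolution W A A u + normalSolution W A A v := by
    nth_rw 2 [← normalSolution_mulVec_self hW hA (x - y)]
    simp only [normalSolution, mulVec_sub]
    abel
  have hperturbation : normalSolution W A (A - B) v = normalSolution W A A v := by
    simp only [normalSolution, transpose_sub, sub_mulVec, hB, sub_zero]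
  rw [hresidual, hperturbation]
  module

theorem gauss_newton_one_step_bound_general
    (g : (Fin p → ℝ) → (Fin m → ℝ)) (G : (Fin p → ℝ) → Matrix (Fin m) (Fin p) ℝ)
    (W : Matrix (Fin m) (Fin m) ℝ) (θhat θk : Fin p → ℝ) (L σlo γ Wlo Whi : ℝ)
    (hG : ∀ θ ∈ segment ℝ θhat θk, HasFDerivAt g (toCLM (G θ)) θ)
    (hW : W.PosDef) (hWlo : 0 < Wlo) (hWmin : Wlo ≤ lamMin W) (hWmax : lamMax W ≤ Whi)
    (hfoc : (G θhat)ᵀ *ᵥ (W *ᵥ g θhat) = 0) (hL : 0 ≤ L)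
    (hLip : ∀ θ ∈ segment ℝ θhat θk, sigMax (G θk - G θ) ≤ L * enorm' (θk - θ))
    (hσpos : 0 < σlo) (hσ : σlo ≤ sigMin (G θk)) (hγ : γ ∈ Set.Icc (0 : ℝ) 1) :
    enorm' ((θk - γ • (((G θk)ᵀ * W * G θk)⁻¹ *ᵥ ((G θk)ᵀ *ᵥ (W *ᵥ g θk)))) - θhat)
      ≤ (1 - γ + γ * (σlo⁻¹ * √(Whi / Wlo) * L * enorm' (θk - θhat)
          + (σlo ^ 2)⁻¹ * (√Whi / Wlo) * L * wnorm W (g θhat))) * enorm' (θk - θhat) := by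
  have hA := mulVec_injective_of_sigMin_pos (hσpos.trans_le hσ)
  set e := θk - θhat
  set r := G θk *ᵥ e - (g θk - g θhat)
  have hr : enorm' r ≤ L * enorm' e * enorm' e :=
    enorm'_linearization_error_le (convex_segment θhat θk)
      (fun θ hθ => (hG θ hθ).hasFDerivWithinAt) (left_mem_segment ℝ _ _) (right_mem_segment ℝ _ _)
      fun θ hθ => (hLip θ hθ).trans
        (mul_le_mul_of_nonneg_left (enorm'_sub_le_of_mem_segment hθ) hL)
  set fit := normalSolution W (G θk) (G θk) r
  have hfit : enorm' fit ≤ σlo⁻¹ * √(Whi / Wlo) * (L * enorm' e * enorm' e) :=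
    (enorm'_normalSolution_self_le hW hWlo hWmin hWmax hσpos hσ r).trans (by gcongr)
  set drift := normalSolution W (G θk) (G θk - G θhat) (g θhat)
  have hdrift : enorm' drift ≤ (σlo ^ 2)⁻¹ * (√Whi / Wlo) * (L * enorm' e) * wnorm W (g θhat) :=
    (enorm'_normalSolution_le hW hWlo hWmin hWmax hσpos hσ _ _).trans
      (mul_le_mul_of_nonneg_right (mul_le_mul_of_nonneg_left (hLip θhat (left_mem_segment ℝ _ _))
        (by positivity)) (wnorm_nonneg W _))
  calc enorm' (θk - γ • normalSolution W (G θk) (G θk) (g θk) - θhat)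
      = enorm' ((1 - γ) • e + γ • (fit - drift)) := by rw [gauss_newton_error_eq hW hA hfoc]
    _ ≤ (1 - γ) * enorm' e + γ * enorm' (fit - drift) := by
        simpa only [enorm'_smul, abs_of_nonneg hγ.1, abs_of_nonneg (sub_nonneg.2 hγ.2)] using
          enorm'_add_le ((1 - γ) • e) (γ • (fit - drift))
    _ ≤ (1 - γ) * enorm' e + γ * (σlo⁻¹ * √(Whi / Wlo) * (L * enorm' e * enorm' e)
          + (σlo ^ 2)⁻¹ * (√Whi / Wlo) * (L * enorm' e) * wnorm W (g θhat)) := by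
        have hfull := (enorm'_sub_le fit drift).trans (add_le_add hfit hdrift)
        exact add_le_add_right (mul_le_mul_of_nonneg_left hfull hγ.1) _
    _ = _ := by ring

end GaussNewton

/-- One-step bound for the Gauss-Newton update (just-identified). -/
theorem gauss_newton_one_step_bound
    {p : ℕ}
    (g : (Fin p → ℝ) → (Fin p → ℝ))
    (G : (Fin p → ℝ) → Matrix (Fin p) (Fin p) ℝ)
    (W : Matrix (Fin p) (Fin p) ℝ)
    (θhat θk : Fin p → ℝ)
    (L σlo γ Wlo Whi : ℝ)
    (hg : ContDiff ℝ 2 g)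
    (hG : ∀ θ, HasFDerivAt g (toCLM (G θ)) θ)
    (hW : W.PosDef)
    (hWlo : 0 < Wlo) (hWmin : Wlo ≤ lamMin W) (hWmax : lamMax W ≤ Whi)
    (hfoc : (G θhat)ᵀ *ᵥ (W *ᵥ g θhat) = 0)
    (hL : 0 ≤ L)
    (hLip : ∀ θ₁ θ₂, sigMax (G θ₁ - G θ₂) ≤ L * enorm' (θ₁ - θ₂))
    (hσpos : 0 < σlo)
    (hσ : σlo ≤ sigMin (G θk))
    (hγ : γ ∈ Set.Ioo (0 : ℝ) 1) :
    enorm' ((θk - γ • (((G θk)ᵀ * W * G θk)⁻¹ *ᵥ ((G θk)ᵀ *ᵥ (W *ᵥ g θk)))) - θhat)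
      ≤ (1 - γ + γ * (σlo⁻¹ * Real.sqrt (Whi / Wlo) * L * enorm' (θk - θhat)
          + (σlo ^ 2)⁻¹ * (Real.sqrt Whi / Wlo) * L * wnorm W (g θhat)))
        * enorm' (θk - θhat) := by
  exact gauss_newton_one_step_bound_general g G W θhat θk L σlo γ Wlo Whi (fun θ _ => hG θ) hW hWlo
    hWmin hWmax hfoc hL (fun θ _ => hLip θk θ) hσpos hσ (Set.Ioo_subset_Icc_self hγ)
end
end

section
/- (Grid search accuracy under local strong convexity and global identification.) Let Q : Θ → ℝ be continuous on a compact Θ ⊆ ℝ^p with unique minimizer θ̂, and suppose there exist ε₁ > 0 and 0 < λ̲ ≤ λ̄ < ∞ such that λ̲·‖θ−θ̂‖² ≤ Q(θ) − Q(θ̂) ≤ λ̄·‖θ−θ̂‖² whenever ‖θ−θ̂‖ ≤ ε₁, and there exists ε₂ ∈ (0, ε₁] such that inf over {θ ∈ Θ : ‖θ−θ̂‖ ≥ ε₁} of Q(θ) > Q(θ̂) + λ̄·ε₂². Let θ₁, …, θ_k ∈ Θ be any grid points with min_{1≤ℓ≤k} ‖θ_ℓ − θ̂‖ ≤ ε₂,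 and let θ̃_k := argmin_{1≤ℓ≤k} Q(θ_ℓ). Then ‖θ̃_k − θ̂‖ ≤ √(λ̄/λ̲) · min_{1≤ℓ≤k} ‖θ_ℓ − θ̂‖. -/
open Matrix Set MeasureTheory
open scoped BigOperators

noncomputable section

/-!
Let `y` be the grid point nearest to the minimizer. The grid minimizer `x` satisfies `Q x ≤ Q y`,
and the upper quadratic bound at `y` puts `Q x` below the separation threshold, so `x` lies in
the region where the lower quadratic bound applies. There
`lamlo * ‖x - θhat‖² ≤ Q x - Q θhat ≤ Q y - Q θhat ≤ lamhi * ‖y - θhat‖²`, and taking square roots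
gives the claim.
-/

theorem le_sqrt_div_mul_of_mul_sq_le {a b s t : ℝ} (ha : 0 < a) (ht : 0 ≤ t)
    (h : a * s ^ 2 ≤ b * t ^ 2) : s ≤ √(b / a) * t := by
  have hsq : s ^ 2 ≤ b / a * t ^ 2 := by
    rwa [div_mul_eq_mul_div, le_div_iff₀' ha]
  calc
    s ≤ √(b / a * t ^ 2) := Real.le_sqrt_of_sq_le hsq
    _ = √(b / a) * t := by rw [Real.sqrt_mul' _ (sq_nonneg t), Real.sqrt_sq ht]

section

-- `d θ` stands for the distance from `θ` to the minimizer of `Q`, and `c` for the minimal value.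
variable {α : Type*} {Θ : Set α} {Q d : α → ℝ} {a b c ε₁ ε₂ : ℝ} {x y : α}

theorem lt_radius_of_le_of_separated (hb : 0 ≤ b)
    (hsep : ∀ θ ∈ Θ, ε₁ ≤ d θ → c + b * ε₂ ^ 2 < Q θ) (hx : x ∈ Θ) (hxy : Q x ≤ Q y)
    (hy_upper : Q y - c ≤ b * d y ^ 2) (hy_nonneg : 0 ≤ d y) (hy_close : d y ≤ ε₂) :
    d x < ε₁ := by
  by_contra! hfar
  have hQx : Q x ≤ c + b * ε₂ ^ 2 :=
    calc
      Q x ≤ Q y := hxy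
      _ ≤ c + b * d y ^ 2 := sub_le_iff_le_add'.mp hy_upper
      _ ≤ c + b * ε₂ ^ 2 := by gcongr
  exact (hsep x hx hfar).not_ge hQx

theorem le_sqrt_div_mul_of_le_of_separated (ha : 0 < a) (hb : 0 ≤ b)
    (hquad : ∀ θ ∈ Θ, d θ ≤ ε₁ → a * d θ ^ 2 ≤ Q θ - c ∧ Q θ - c ≤ b * d θ ^ 2)
    (hε : ε₂ ≤ ε₁) (hsep : ∀ θ ∈ Θ, ε₁ ≤ d θ → c + b * ε₂ ^ 2 < Q θ)
    (hx : x ∈ Θ) (hy : y ∈ Θ) (hxy : Q x ≤ Q y) (hy_nonneg : 0 ≤ d y) (hy_close : d y ≤ ε₂) :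
    d x ≤ √(b / a) * d y := by
  have hy_upper : Q y - c ≤ b * d y ^ 2 := (hquad y hy (hy_close.trans hε)).2
  have hx_near : d x < ε₁ :=
    lt_radius_of_le_of_separated hb hsep hx hxy hy_upper hy_nonneg hy_close
  refine le_sqrt_div_mul_of_mul_sq_le ha hy_nonneg ?_
  calc
    a * d x ^ 2 ≤ Q x - c := (hquad x hx hx_near.le).1
    _ ≤ Q y - c := sub_le_sub_right hxy c
    _ ≤ b * d y ^ 2 := hy_upper

theorem grid_search_accuracy_general {ι : Type*} [Finite ι] (ha : 0 < a) (hb : 0 ≤ b)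
    (hd : ∀ θ ∈ Θ, 0 ≤ d θ)
    (hquad : ∀ θ ∈ Θ, d θ ≤ ε₁ → a * d θ ^ 2 ≤ Q θ - c ∧ Q θ - c ≤ b * d θ ^ 2)
    (hε : ε₂ ≤ ε₁) (hsep : ∀ θ ∈ Θ, ε₁ ≤ d θ → c + b * ε₂ ^ 2 < Q θ)
    {pts : ι → α} (hpts : ∀ i, pts i ∈ Θ) (hclose : (⨅ i, d (pts i)) ≤ ε₂)
    {j : ι} (hj : ∀ i, Q (pts j) ≤ Q (pts i)) :
    d (pts j) ≤ √(b / a) * ⨅ i, d (pts i) := by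
  have : Nonempty ι := ⟨j⟩
  obtain ⟨m, hm⟩ := exists_eq_ciInf_of_finite (f := fun i => d (pts i))
  rw [← hm] at hclose ⊢
  exact le_sqrt_div_mul_of_le_of_separated ha hb hquad hε hsep (hpts j) (hpts m) (hj m)
    (hd _ (hpts m)) hclose

end

/-- Accuracy of grid search under local strong convexity and global
identification. -/
theorem grid_search_accuracy
    {p : ℕ} (Θ : Set (Fin p → ℝ)) (Q : (Fin p → ℝ) → ℝ)
    (θhat : Fin p → ℝ) (ε₁ ε₂ lamlo lamhi : ℝ)
    (hΘcomp : IsCompact Θ) (hQ : ContinuousOn Q Θ)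
    (hθhat : θhat ∈ Θ)
    (hmin : ∀ θ ∈ Θ, θ ≠ θhat → Q θhat < Q θ)
    (hε₁ : 0 < ε₁) (hlamlo : 0 < lamlo) (hlam : lamlo ≤ lamhi)
    (hlsc : ∀ θ ∈ Θ, enorm' (θ - θhat) ≤ ε₁ →
      lamlo * enorm' (θ - θhat) ^ 2 ≤ Q θ - Q θhat
        ∧ Q θ - Q θhat ≤ lamhi * enorm' (θ - θhat) ^ 2)
    (hε₂ : 0 < ε₂) (hε₂₁ : ε₂ ≤ ε₁)
    (hsep : ∀ θ ∈ Θ, ε₁ ≤ enorm' (θ - θhat) → Q θhat + lamhi * ε₂ ^ 2 < Q θ)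
    (k : ℕ) (pts : Fin k → (Fin p → ℝ)) (hpts : ∀ ℓ, pts ℓ ∈ Θ)
    (hclose : (⨅ ℓ, enorm' (pts ℓ - θhat)) ≤ ε₂)
    (ℓstar : Fin k) (hℓstar : ∀ ℓ, Q (pts ℓstar) ≤ Q (pts ℓ)) :
    enorm' (pts ℓstar - θhat)
      ≤ Real.sqrt (lamhi / lamlo) * ⨅ ℓ, enorm' (pts ℓ - θhat) := by
  exact grid_search_accuracy_general (d := fun θ => enorm' (θ - θhat)) hlamlo
    (hlamlo.le.trans hlam) (fun _ _ => Real.sqrt_nonneg _) hlsc hε₂₁ hsep hpts hclose hℓstar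
end
end
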